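/- arXiv:1210.2962 — 2 statements merged into one kernel-verified Lean document; each statement's English description precedes it below -/
import Mathlib

section
/- (Necessity of the linearizability conditions.) Let U ⊆ ℝ² be open and χ, φ : U → ℝ real-analytic with χ_x φ_y − χ_y φ_x ≡ 1 on U. Let W ⊆ ℝ² be open with W ⊆ U, and let f : W × ℝ → ℝ be real-analytic. Suppose that for every open interval I and every real-analytic solution c : I → ℝ of c''(x) = f(x, c(x), c'(x)) with (x, c(x)) ∈ W for all x ∈ I, the image curve lies on an affine line: there exist (a, b, k) ∈ ℝ³ with (a, b) ≠ (0,0) such that a·χ(x, c(x)) + b·φ(x, c(x)) = k for all x ∈ I. Then there exist real-analytic functions A, B, C, D : W → ℝ such that f(x,y,p) = A(x,y)p³ + 3B(x,y)p² + 3C(x,y)p + D(x,y) on W × ℝ, and D_y − C_x = 2(BD − C²), C_y − B_x = AD − BC, B_y − A_x = 2(AC − B²) hold on W. -/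
/-- Partial derivative with respect to the first variable of a function on `ℝ²`. -/
noncomputable def pdx (g : ℝ × ℝ → ℝ) (z : ℝ × ℝ) : ℝ := fderiv ℝ g z (1, 0)

/-- Partial derivative with respect to the second variable of a function on `ℝ²`. -/
noncomputable def pdy (g : ℝ × ℝ → ℝ) (z : ℝ × ℝ) : ℝ := fderiv ℝ g z (0, 1)

section ode
open Topology Set Filter
open scoped ContDiff unitInterval
variable {V : Type*} [NormedAddCommGroup V] [NormedSpace ℝ V]

/-- Pointwise extension of a continuous multilinear map to continuous functions. -/
noncomputable def liftMulti {n : ℕ} (p : ContinuousMultilinearMap ℝ (fun _ : Fin n => V) V) :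
    ContinuousMultilinearMap ℝ (fun _ : Fin n => C(I, V)) C(I, V) :=
  MultilinearMap.mkContinuous
    { toFun := fun m => ⟨fun t => p (fun i => m i t), by fun_prop⟩
      map_update_add' := by
        intro _ m i x y
        ext t
        have h : ∀ z : C(I, V), (fun j => (Function.update m i z) j t)
            = Function.update (fun j => m j t) i (z t) := by
          intro z; funext j
          by_cases hj : j = i
          · subst hj; simp
          · simp [hj]
        simp [h]
      map_update_smul' := by
        intro _ m i c x
        ext t
        have h : ∀ z : C(I, V), (fun j => (Function.update m i z) j t)
            = Function.update (fun j => m j t) i (z t) := by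
          intro z; funext j
          by_cases hj : j = i
          · subst hj; simp
          · simp [hj]
        simp [h] }
    ‖p‖ (by
      intro m
      rw [ContinuousMap.norm_le _ (by positivity)]
      intro t
      refine (p.le_opNorm _).trans ?_
      gcongr with i
      exact (m i).norm_coe_le_norm t)

lemma liftMulti_apply {n : ℕ} (p : ContinuousMultilinearMap ℝ (fun _ : Fin n => V) V)
    (m : Fin n → C(I, V)) (t : I) : liftMulti p m t = p (fun i => m i t) := rfl

lemma norm_liftMulti_le {n : ℕ} (p : ContinuousMultilinearMap ℝ (fun _ : Fin n => V) V) :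
    ‖liftMulti p‖ ≤ ‖p‖ := MultilinearMap.mkContinuous_norm_le _ (norm_nonneg _) _

lemma exists_nemytskii [CompleteSpace V] {F : V → V} {v0 : V} (hF : AnalyticAt ℝ F v0) :
    ∃ N : C(I, V) → C(I, V), AnalyticAt ℝ N 0 ∧
      ∃ r > 0, ∀ w : C(I, V), ‖w‖ < r → ∀ t, N w t = F (v0 + w t) := by
  obtain ⟨p, r, hp⟩ := hF
  let q : FormalMultilinearSeries ℝ C(I, V) C(I, V) := fun n => liftMulti (p n)
  have hrad : r ≤ q.radius := by
    refine hp.r_le.trans ?_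
    refine ENNReal.le_of_forall_nnreal_lt fun s hs => ?_
    obtain ⟨C, -, hC⟩ := p.norm_mul_pow_le_of_lt_radius hs
    refine q.le_radius_of_bound C fun n => ?_
    refine le_trans ?_ (hC n)
    gcongr
    exact norm_liftMulti_le _
  have hq := q.hasFPowerSeriesOnBall (hp.r_pos.trans_le hrad)
  refine ⟨q.sum, hq.analyticAt, ?_⟩
  obtain ⟨s, hs0, hs⟩ := ENNReal.lt_iff_exists_nnreal_btwn.1 hp.r_pos
  refine ⟨s, by exact_mod_cast hs0, fun w hw t => ?_⟩
  have hw' : ‖w‖ₑ < r := by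
    refine lt_trans ?_ hs
    rw [enorm_eq_nnnorm]
    exact_mod_cast hw
  have h1 := hq.hasSum (y := w) (by simpa using hw'.trans_le hrad)
  have h2 := (ContinuousMap.evalCLM ℝ t).hasSum h1
  have h3 := hp.hasSum (y := w t) (by
    have : ‖w t‖ₑ ≤ ‖w‖ₑ := by
      rw [enorm_eq_nnnorm, enorm_eq_nnnorm]
      exact_mod_cast w.norm_coe_le_norm t
    simpa using this.trans_lt hw')
  have h4 := h2.unique h3
  simpa using h4

lemma continuous_ext {V : Type*} [NormedAddCommGroup V] (w : C(I, V)) :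
    Continuous fun s : ℝ => w (projIcc 0 1 zero_le_one s) := by
  fun_prop

/-- The integration operator. -/
noncomputable def intOp [CompleteSpace V] : C(I, V) →L[ℝ] C(I, V) :=
  LinearMap.mkContinuous
    { toFun := fun w => ⟨fun t => ∫ s in (0:ℝ)..t, w (projIcc 0 1 zero_le_one s), by
        have := intervalIntegral.continuous_primitive
          (fun a b => (continuous_ext w).intervalIntegrable (μ := MeasureTheory.volume) a b) 0
        exact this.comp continuous_subtype_val⟩
      map_add' := by
        intro w w'
        ext t
        simp only [ContinuousMap.coe_mk, ContinuousMap.add_apply]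
        exact intervalIntegral.integral_add ((continuous_ext w).intervalIntegrable _ _)
          ((continuous_ext w').intervalIntegrable _ _)
      map_smul' := by
        intro c w
        ext t
        simp }
    1 (by
      intro w
      rw [ContinuousMap.norm_le _ (by positivity)]
      intro t
      have := intervalIntegral.norm_integral_le_of_norm_le_const (a := 0) (b := (t : ℝ))
        (C := ‖w‖) (f := fun s => w (projIcc 0 1 zero_le_one s))
        (fun s _ => w.norm_coe_le_norm _)
      refine this.trans ?_
      rw [mul_comm]
      gcongr
      rw [sub_zero, abs_of_nonneg t.2.1]
      exact t.2.2)

lemma intOp_apply [CompleteSpace V] (w : C(I, V)) (t : I) :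
    intOp w t = ∫ s in (0:ℝ)..t, w (projIcc 0 1 zero_le_one s) := rfl

theorem exists_analytic_solution [CompleteSpace V] {F : V → V} {v0 : V}
    (hF : AnalyticAt ℝ F v0) :
    ∃ y : ℝ → V, y 0 = v0 ∧ AnalyticAt ℝ y 0 ∧ ∀ᶠ t in 𝓝 (0:ℝ), deriv y t = F (y t) := by
  obtain ⟨N, hN, r, hr, hNF⟩ := exists_nemytskii hF
  let G : ℝ × C(I, V) → C(I, V) := fun u => u.2 - u.1 • intOp (N u.2)
  have hG : AnalyticAt ℝ G (0, 0) := by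
    have h2 : AnalyticAt ℝ (fun u : ℝ × C(I, V) => N u.2) (0, 0) :=
      AnalyticAt.fun_comp (g := N) (f := fun u : ℝ × C(I, V) => u.2) hN analyticAt_snd
    have h3 : AnalyticAt ℝ (fun u : ℝ × C(I, V) => intOp (N u.2)) (0, 0) :=
      AnalyticAt.fun_comp (g := fun w => intOp w) (ContinuousLinearMap.analyticAt (intOp (V := V)) _) h2
    exact analyticAt_snd.sub (analyticAt_fst.smul h3)
  have hGω : ContDiffAt ℝ ω G (0, 0) := hG.contDiffAt
  have hinv : (fderiv ℝ G (0, 0) ∘L .inr ℝ ℝ C(I, V)).IsInvertible := by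
    have h1 : HasFDerivAt (fun w => G (0, w)) (fderiv ℝ G (0, 0) ∘L .inr ℝ ℝ C(I, V)) 0 :=
      HasFDerivAt.comp (g := G) (f := fun w => (0, w)) 0
        (hG.differentiableAt.hasFDerivAt) (hasFDerivAt_prodMk_right 0 0)
    have h2 : HasFDerivAt (fun w => G (0, w)) (ContinuousLinearMap.id ℝ C(I, V)) 0 := by
      have : (fun w => G (0, w)) = id := by funext w; simp [G]
      rw [this]; exact hasFDerivAt_id _
    rw [h1.unique h2]
    exact ⟨ContinuousLinearEquiv.refl ℝ _, rfl⟩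
  have hω : (ω : WithTop ℕ∞) ≠ 0 := by simp
  set ψ := hGω.implicitFunction hω hinv with hψ
  have hψ0 : ψ 0 = 0 := hGω.implicitFunction_apply_self hω hinv
  have hψa : AnalyticAt ℝ ψ 0 := (hGω.contDiffAt_implicitFunction hω hinv).analyticAt
  have hiff := hGω.eventually_apply_eq_iff_implicitFunction hω hinv
  have hG0 : G (0, 0) = 0 := by simp [G]
  rw [hG0, ← hψ, Metric.eventually_nhds_iff] at hiff
  obtain ⟨δ, hδ, hiff⟩ := hiff
  have hψc : ∀ᶠ e in 𝓝 (0:ℝ), ‖ψ e‖ < min δ r := by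
    have := hψa.continuousAt.norm
    unfold ContinuousAt at this
    simp only [hψ0, norm_zero] at this
    exact this.eventually_lt_const (by positivity)
  obtain ⟨η, hη, hψc⟩ := Metric.eventually_nhds_iff.1 hψc
  let e : ℝ := min η δ / 2
  have he : 0 < e := by positivity
  have heη : e < η := by have := min_le_left η δ; have : 0 < min η δ := by positivity
                         simp only [e]; linarith
  have heδ : e < δ := by have := min_le_right η δ; have : 0 < min η δ := by positivity
                         simp only [e]; linarith
  set w := ψ e with hw
  have hwn : ‖w‖ < min δ r := hψc (by simpa [abs_of_pos he] using heη)
  have hwδ := hwn.trans_le (min_le_left _ _)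
  have hwr := hwn.trans_le (min_le_right _ _)
  have hdist : ∀ (a : ℝ) (b : C(I, V)), |a| < δ → ‖b‖ < δ → dist (a, b) ((0:ℝ), (0 : C(I,V))) < δ := by
    intro a b ha hb
    rw [Prod.dist_eq]
    simpa using ⟨ha, hb⟩
  have hGw : G (e, w) = 0 := (hiff (hdist e w (by rwa [abs_of_pos he]) hwδ)).2 hw.symm
  have hweq : ∀ t : I, w t = e • ∫ s in (0:ℝ)..t, N w (projIcc 0 1 zero_le_one s) := by
    intro t
    have := congrArg (fun g => g t) (sub_eq_zero.1 hGw)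
    simpa [intOp_apply] using this
  -- rescaling
  have hscale : ∀ t : I, ψ (e * t) 1 = w t := by
    intro t
    let wt : C(I, V) := ⟨fun s => w (t * s), by fun_prop⟩
    have hwt : ‖wt‖ ≤ ‖w‖ := by
      rw [ContinuousMap.norm_le _ (norm_nonneg _)]
      intro s; exact w.norm_coe_le_norm _
    have hN' : ∀ s : ℝ, s ∈ Icc (0:ℝ) 1 → N wt (projIcc 0 1 zero_le_one s) =
        N w (projIcc 0 1 zero_le_one (t * s)) := by
      intro s hs
      rw [hNF _ (hwt.trans_lt hwr), hNF _ hwr]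
      have h2 : (t : ℝ) * s ∈ Icc (0:ℝ) 1 := (t * ⟨s, hs⟩ : I).2
      rw [projIcc_of_mem _ hs, projIcc_of_mem _ h2]
      rfl
    have hGt : G (e * t, wt) = 0 := by
      refine sub_eq_zero.2 ?_
      ext s
      change w (t * s) = (e * t) • (intOp (N wt) s)
      rw [hweq, intOp_apply, mul_smul]
      congr 1
      rw [intervalIntegral.integral_congr (a := 0) (b := (s : ℝ)) (f := fun x => N wt (projIcc 0 1 zero_le_one x)) (g := fun x => N w (projIcc 0 1 zero_le_one (t * x)))]
      · rw [intervalIntegral.smul_integral_comp_mul_left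
          (fun x => N w (projIcc 0 1 zero_le_one x))]
        simp
      · intro x hx
        rw [uIcc_of_le s.2.1] at hx
        exact hN' x ⟨hx.1, hx.2.trans s.2.2⟩
    have hab : |e * t| < δ := by
      rw [abs_of_nonneg (mul_nonneg he.le t.2.1)]
      have := mul_le_mul_of_nonneg_left t.2.2 he.le
      linarith
    have := (hiff (hdist (e * t) wt hab (hwt.trans_lt hwδ))).1 hGt
    rw [this]
    simp [wt]
  let y : ℝ → V := fun τ => v0 + ψ τ 1
  have hy0 : y 0 = v0 := by simp [y, hψ0]
  have hya : AnalyticAt ℝ y 0 := by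
    have : AnalyticAt ℝ (fun τ => ContinuousMap.evalCLM ℝ (1 : I) (ψ τ)) 0 :=
      AnalyticAt.fun_comp (g := fun w => ContinuousMap.evalCLM ℝ (1 : I) w)
        (ContinuousLinearMap.analyticAt _ _) hψa
    exact analyticAt_const.add this
  refine ⟨y, hy0, hya, ?_⟩
  have hFy : AnalyticAt ℝ (fun t => F (y t)) 0 :=
    AnalyticAt.fun_comp (g := F) (by rwa [hy0]) hya
  refine (hya.deriv.frequently_eq_iff_eventually_eq hFy).1 ?_
  have hpos : ∀ τ ∈ Ioo 0 e, deriv y τ = F (y τ) := by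
    intro τ hτ
    have hmem : ∀ ρ ∈ Ioo 0 e, ρ / e ∈ Icc (0:ℝ) 1 := fun ρ hρ =>
      ⟨div_nonneg hρ.1.le he.le, (div_le_one he).2 hρ.2.le⟩
    have hyw : ∀ (ρ : ℝ) (hρ : ρ ∈ Ioo 0 e), y ρ = v0 + w ⟨ρ / e, hmem ρ hρ⟩ := by
      intro ρ hρ
      simp only [y]
      rw [← hscale]
      congr 3
      field_simp
    let g : ℝ → V := fun s => N w (projIcc 0 1 zero_le_one s)
    have hg : Continuous g := continuous_ext _
    have h1 : HasDerivAt (fun a => ∫ s in (0:ℝ)..a, g s) (g (τ / e)) (τ / e) :=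
      intervalIntegral.integral_hasDerivAt_right (hg.intervalIntegrable _ _)
        (hg.stronglyMeasurableAtFilter _ _) hg.continuousAt
    have h2 : HasDerivAt (fun ρ => v0 + e • ∫ s in (0:ℝ)..(ρ / e), g s) (g (τ / e)) τ := by
      have h3 : HasDerivAt (fun ρ : ℝ => ρ / e) (1 / e) τ := (hasDerivAt_id τ).div_const e
      have := ((h1.scomp τ h3).const_smul e).const_add v0
      refine this.congr_deriv ?_
      rw [smul_smul, mul_one_div_cancel he.ne', one_smul]
    have h4 : y =ᶠ[𝓝 τ] (fun ρ => v0 + e • ∫ s in (0:ℝ)..(ρ / e), g s) := by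
      filter_upwards [Ioo_mem_nhds hτ.1 hτ.2] with ρ hρ
      rw [hyw ρ hρ, hweq]
    rw [h4.deriv_eq, h2.deriv, hyw τ hτ]
    simp only [g]
    rw [hNF _ hwr, projIcc_of_mem _ (hmem τ hτ)]
  have h5 : ∀ᶠ τ in 𝓝[>] (0:ℝ), deriv y τ = F (y τ) := by
    filter_upwards [Ioo_mem_nhdsGT he] with τ hτ using hpos τ hτ
  exact h5.frequently.filter_mono (nhdsWithin_mono _ (fun x hx => ne_of_gt hx))

end ode

section calculus

lemma hasDerivAt_graph {g : ℝ × ℝ → ℝ} {c : ℝ → ℝ} {x p : ℝ} (hg : DifferentiableAt ℝ g (x, c x))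
    (hc : HasDerivAt c p x) :
    HasDerivAt (fun t => g (t, c t)) (pdx g (x, c x) + p * pdy g (x, c x)) x := by
  have h1 : HasDerivAt (fun t => (t, c t)) ((1 : ℝ), p) x := (hasDerivAt_id x).prodMk hc
  have h2 := HasFDerivAt.comp_hasDerivAt (f := fun t => (t, c t)) x hg.hasFDerivAt h1
  refine h2.congr_deriv ?_
  have : ((1 : ℝ), p) = (1, 0) + p • ((0 : ℝ), (1 : ℝ)) := by simp
  rw [this, map_add, map_smul]
  rfl

lemma pdx_analytic {g : ℝ × ℝ → ℝ} {U : Set (ℝ × ℝ)} (hg : AnalyticOnNhd ℝ g U) :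
    AnalyticOnNhd ℝ (pdx g) U := fun z hz =>
  AnalyticAt.fun_comp (g := fun L => ContinuousLinearMap.apply ℝ ℝ ((1 : ℝ), (0 : ℝ)) L)
    (f := fderiv ℝ g) (ContinuousLinearMap.analyticAt _ _) (hg z hz).fderiv

lemma pdy_analytic {g : ℝ × ℝ → ℝ} {U : Set (ℝ × ℝ)} (hg : AnalyticOnNhd ℝ g U) :
    AnalyticOnNhd ℝ (pdy g) U := fun z hz =>
  AnalyticAt.fun_comp (g := fun L => ContinuousLinearMap.apply ℝ ℝ ((0 : ℝ), (1 : ℝ)) L)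
    (f := fderiv ℝ g) (ContinuousLinearMap.analyticAt _ _) (hg z hz).fderiv

lemma pd_symm {g : ℝ × ℝ → ℝ} {z : ℝ × ℝ} (hg : AnalyticAt ℝ g z) :
    pdx (pdy g) z = pdy (pdx g) z := by
  have hs : IsSymmSndFDerivAt ℝ g z :=
    ContDiffAt.isSymmSndFDerivAt_of_omega hg.contDiffAt
  have hd : HasFDerivAt (fderiv ℝ g) (fderiv ℝ (fderiv ℝ g) z) z :=
    hg.fderiv.differentiableAt.hasFDerivAt
  have hv : ∀ v w : ℝ × ℝ, fderiv ℝ (fun z => fderiv ℝ g z v) z w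
      = fderiv ℝ (fderiv ℝ g) z w v := by
    intro v w
    have := (hd.clm_apply (hasFDerivAt_const v z)).fderiv
    rw [this]; simp
  have h := hs.eq (1, 0) (0, 1)
  rw [← hv, ← hv] at h
  exact h

lemma pdx_congr {g h : ℝ × ℝ → ℝ} {U : Set (ℝ × ℝ)} (hU : IsOpen U) (e : ∀ z ∈ U, g z = h z)
    {z : ℝ × ℝ} (hz : z ∈ U) : pdx g z = pdx h z := by
  have : g =ᶠ[nhds z] h := by filter_upwards [hU.mem_nhds hz] with w hw using e w hw
  simp only [pdx, this.fderiv_eq]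

lemma pdy_congr {g h : ℝ × ℝ → ℝ} {U : Set (ℝ × ℝ)} (hU : IsOpen U) (e : ∀ z ∈ U, g z = h z)
    {z : ℝ × ℝ} (hz : z ∈ U) : pdy g z = pdy h z := by
  have : g =ᶠ[nhds z] h := by filter_upwards [hU.mem_nhds hz] with w hw using e w hw
  simp only [pdy, this.fderiv_eq]

lemma fderiv_br {a b c d : ℝ × ℝ → ℝ} {z : ℝ × ℝ} (v : ℝ × ℝ) (ha : DifferentiableAt ℝ a z)
    (hb : DifferentiableAt ℝ b z) (hc : DifferentiableAt ℝ c z) (hd : DifferentiableAt ℝ d z) :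
    fderiv ℝ (fun z => a z * b z - c z * d z) z v =
      fderiv ℝ a z v * b z + a z * fderiv ℝ b z v
        - (fderiv ℝ c z v * d z + c z * fderiv ℝ d z v) := by
  rw [((ha.hasFDerivAt.fun_mul hb.hasFDerivAt).fun_sub (hc.hasFDerivAt.fun_mul hd.hasFDerivAt)).fderiv]
  simp
  ring

lemma pdx_br {a b c d : ℝ × ℝ → ℝ} {z : ℝ × ℝ} (ha : DifferentiableAt ℝ a z)
    (hb : DifferentiableAt ℝ b z) (hc : DifferentiableAt ℝ c z) (hd : DifferentiableAt ℝ d z) :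
    pdx (fun z => a z * b z - c z * d z) z =
      pdx a z * b z + a z * pdx b z - (pdx c z * d z + c z * pdx d z) :=
  fderiv_br _ ha hb hc hd

lemma pdy_br {a b c d : ℝ × ℝ → ℝ} {z : ℝ × ℝ} (ha : DifferentiableAt ℝ a z)
    (hb : DifferentiableAt ℝ b z) (hc : DifferentiableAt ℝ c z) (hd : DifferentiableAt ℝ d z) :
    pdy (fun z => a z * b z - c z * d z) z =
      pdy a z * b z + a z * pdy b z - (pdy c z * d z + c z * pdy d z) :=
  fderiv_br _ ha hb hc hd

/-- Local analytic solutions of the second order equation. -/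
lemma exists_solution {W : Set (ℝ × ℝ)} (hW : IsOpen W) {f : ℝ × ℝ × ℝ → ℝ}
    (hf : AnalyticOnNhd ℝ f {z : ℝ × ℝ × ℝ | (z.1, z.2.1) ∈ W}) {x0 y0 p0 : ℝ}
    (h0 : (x0, y0) ∈ W) :
    ∃ ε > 0, ∃ c : ℝ → ℝ, AnalyticOnNhd ℝ c (Metric.ball x0 ε) ∧ c x0 = y0 ∧ deriv c x0 = p0 ∧
      (∀ x ∈ Metric.ball x0 ε, (x, c x) ∈ W) ∧
      (∀ x ∈ Metric.ball x0 ε, deriv (deriv c) x = f (x, c x, deriv c x)) := by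
  let F : ℝ × ℝ × ℝ → ℝ × ℝ × ℝ := fun v => (1, v.2.2, f v)
  have hF : AnalyticAt ℝ F (x0, y0, p0) := by
    refine analyticAt_const.prod (AnalyticAt.prod ?_ (hf _ h0))
    exact AnalyticAt.fun_comp (g := fun w : ℝ × ℝ => w.2) analyticAt_snd analyticAt_snd
  obtain ⟨u, hu0, hua, hu⟩ := exists_analytic_solution hF
  have hWe : ∀ᶠ t in nhds (0:ℝ), ((u t).1, (u t).2.1) ∈ W := by
    have hc : ContinuousAt (fun t => ((u t).1, (u t).2.1)) 0 := by
      have := hua.continuousAt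
      fun_prop
    exact hc.eventually_mem (hW.mem_nhds (by simpa [hu0] using h0))
  obtain ⟨ε, hε, hall⟩ := Metric.eventually_nhds_iff_ball.1
    ((hu.and hua.eventually_analyticAt).and hWe)
  have hd : ∀ t ∈ Metric.ball (0:ℝ) ε, HasDerivAt u (1, (u t).2.2, f (u t)) t := by
    intro t ht
    have h := (hall t ht).1.2.differentiableAt.hasDerivAt
    rw [(hall t ht).1.1] at h
    exact h
  have hd1 : ∀ t ∈ Metric.ball (0:ℝ) ε, HasDerivAt (fun t => (u t).1) 1 t := fun t ht =>
    (hasFDerivAt_fst (𝕜 := ℝ)).comp_hasDerivAt (f := u) t (hd t ht)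
  have hd' : ∀ t ∈ Metric.ball (0:ℝ) ε, HasDerivAt (fun t => (u t).2) ((u t).2.2, f (u t)) t :=
    fun t ht => (hasFDerivAt_snd (𝕜 := ℝ)).comp_hasDerivAt (f := u) t (hd t ht)
  have hd2 : ∀ t ∈ Metric.ball (0:ℝ) ε, HasDerivAt (fun t => (u t).2.1) (u t).2.2 t :=
    fun t ht => (hasFDerivAt_fst (𝕜 := ℝ)).comp_hasDerivAt (f := fun t => (u t).2) t (hd' t ht)
  have hd3 : ∀ t ∈ Metric.ball (0:ℝ) ε, HasDerivAt (fun t => (u t).2.2) (f (u t)) t :=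
    fun t ht => (hasFDerivAt_snd (𝕜 := ℝ)).comp_hasDerivAt (f := fun t => (u t).2) t (hd' t ht)
  have hu1 : ∀ t ∈ Metric.ball (0:ℝ) ε, (u t).1 = x0 + t := by
    intro t ht
    have hdd : ∀ s ∈ Metric.ball (0:ℝ) ε, HasDerivAt (fun t => (u t).1 - t) 0 s := by
      intro s hs
      exact ((hd1 s hs).fun_sub (hasDerivAt_id' s)).congr_deriv (sub_self 1)
    have := Metric.isOpen_ball.is_const_of_deriv_eq_zero (f := fun t => (u t).1 - t)
      (convex_ball (0:ℝ) ε).isPreconnected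
      (fun s hs => (hdd s hs).differentiableAt.differentiableWithinAt)
      (fun s hs => (hdd s hs).deriv) ht (Metric.mem_ball_self hε)
    simp [hu0] at this
    linarith
  have hmem : ∀ x ∈ Metric.ball x0 ε, x - x0 ∈ Metric.ball (0:ℝ) ε := by
    intro x hx
    simpa [Real.dist_eq] using hx
  have hc1 : ∀ x ∈ Metric.ball x0 ε,
      HasDerivAt (fun x => (u (x - x0)).2.1) (u (x - x0)).2.2 x := fun x hx =>
    (hd2 _ (hmem x hx)).comp_sub_const x x0
  have hc2 : ∀ x ∈ Metric.ball x0 ε,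
      HasDerivAt (fun x => (u (x - x0)).2.2) (f (u (x - x0))) x := fun x hx =>
    (hd3 _ (hmem x hx)).comp_sub_const x x0
  refine ⟨ε, hε, fun x => (u (x - x0)).2.1, ?_, by simp [hu0], ?_, ?_, ?_⟩
  · intro x hx
    have h1 := (hall _ (hmem x hx)).1.2
    have h2 : AnalyticAt ℝ (fun x => u (x - x0)) x :=
      AnalyticAt.fun_comp (g := u) (f := fun x => x - x0) h1 (analyticAt_id.sub analyticAt_const)
    have h3 : AnalyticAt ℝ (fun x => (u (x - x0)).2) x :=
      AnalyticAt.fun_comp (g := fun v : ℝ × ℝ × ℝ => v.2) analyticAt_snd h2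
    exact AnalyticAt.fun_comp (g := fun v : ℝ × ℝ => v.1) analyticAt_fst h3
  · rw [(hc1 x0 (Metric.mem_ball_self hε)).deriv]
    simp [hu0]
  · intro x hx
    have h := (hall _ (hmem x hx)).2
    rw [hu1 _ (hmem x hx)] at h
    simpa using h
  · intro x hx
    have he : deriv (fun x => (u (x - x0)).2.1) =ᶠ[nhds x] fun x => (u (x - x0)).2.2 := by
      filter_upwards [Metric.isOpen_ball.mem_nhds hx] with t ht using (hc1 t ht).deriv
    rw [he.deriv_eq, (hc2 x hx).deriv, (hc1 x hx).deriv]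
    congr 1
    refine Prod.ext ?_ rfl
    rw [hu1 _ (hmem x hx)]
    ring

end calculus

/-- Necessity of the linearizability conditions: if an area-preserving real-analytic
point transformation `(χ, φ)` maps the graphs of all solutions of `y'' = f(x,y,y')`
onto affine lines, then `f` is cubic in `y'` and its coefficients satisfy the
stated system of PDEs. -/
theorem stmt10 (U : Set (ℝ × ℝ)) (hU : IsOpen U)
    (χ φ : ℝ × ℝ → ℝ)
    (hχ : AnalyticOnNhd ℝ χ U) (hφ : AnalyticOnNhd ℝ φ U)
    (hJ : ∀ z ∈ U, pdx χ z * pdy φ z - pdy χ z * pdx φ z = 1)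
    (W : Set (ℝ × ℝ)) (hW : IsOpen W) (hWU : W ⊆ U)
    (f : ℝ × ℝ × ℝ → ℝ)
    (hf : AnalyticOnNhd ℝ f {z : ℝ × ℝ × ℝ | (z.1, z.2.1) ∈ W})
    (hline : ∀ I : Set ℝ, IsOpen I → I.OrdConnected →
      ∀ c : ℝ → ℝ, AnalyticOnNhd ℝ c I →
        (∀ x ∈ I, (x, c x) ∈ W) →
        (∀ x ∈ I, deriv (deriv c) x = f (x, c x, deriv c x)) →
        ∃ a b k : ℝ, (a, b) ≠ ((0 : ℝ), (0 : ℝ)) ∧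
          ∀ x ∈ I, a * χ (x, c x) + b * φ (x, c x) = k) :
    ∃ A B C D : ℝ × ℝ → ℝ,
      AnalyticOnNhd ℝ A W ∧ AnalyticOnNhd ℝ B W ∧
      AnalyticOnNhd ℝ C W ∧ AnalyticOnNhd ℝ D W ∧
      (∀ x y p : ℝ, (x, y) ∈ W → f (x, y, p) =
        A (x, y) * p ^ 3 + 3 * B (x, y) * p ^ 2 + 3 * C (x, y) * p + D (x, y)) ∧
      (∀ z ∈ W, pdy D z - pdx C z = 2 * (B z * D z - C z ^ 2)) ∧
      (∀ z ∈ W, pdy C z - pdx B z = A z * D z - B z * C z) ∧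
      (∀ z ∈ W, pdy B z - pdx A z = 2 * (A z * C z - B z ^ 2)) := by
  have hχx := pdx_analytic hχ
  have hχy := pdy_analytic hχ
  have hφx := pdx_analytic hφ
  have hφy := pdy_analytic hφ
  have hχxx := pdx_analytic hχx
  have hχxy := pdy_analytic hχx
  have hχyy := pdy_analytic hχy
  have hφxx := pdx_analytic hφx
  have hφxy := pdy_analytic hφx
  have hφyy := pdy_analytic hφy
  -- symmetry of second derivatives
  have sχ : ∀ z ∈ U, pdx (pdy χ) z = pdy (pdx χ) z := fun z hz => pd_symm (hχ z hz)
  have sφ : ∀ z ∈ U, pdx (pdy φ) z = pdy (pdx φ) z := fun z hz => pd_symm (hφ z hz)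
  -- derivatives of the Jacobian condition
  have hJx : ∀ z ∈ U, pdx (pdx χ) z * pdy φ z + pdx χ z * pdy (pdx φ) z
      - (pdy (pdx χ) z * pdx φ z + pdy χ z * pdx (pdx φ) z) = 0 := by
    intro z hz
    have h := pdx_congr hU hJ hz
    rw [pdx_br (hχx z hz).differentiableAt (hφy z hz).differentiableAt
      (hχy z hz).differentiableAt (hφx z hz).differentiableAt, sχ z hz, sφ z hz] at h
    rw [h]
    simp [pdx]
  have hJy : ∀ z ∈ U, pdy (pdx χ) z * pdy φ z + pdx χ z * pdy (pdy φ) z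
      - (pdy (pdy χ) z * pdx φ z + pdy χ z * pdy (pdx φ) z) = 0 := by
    intro z hz
    have h := pdy_congr hU hJ hz
    rw [pdy_br (hχx z hz).differentiableAt (hφy z hz).differentiableAt
      (hχy z hz).differentiableAt (hφx z hz).differentiableAt] at h
    rw [h]
    simp [pdy]
  -- the coefficients
  let A : ℝ × ℝ → ℝ := fun z => pdy φ z * pdy (pdy χ) z - pdy χ z * pdy (pdy φ) z
  let B : ℝ × ℝ → ℝ := fun z => pdx φ z * pdy (pdy χ) z - pdx χ z * pdy (pdy φ) z
  let C : ℝ × ℝ → ℝ := fun z => pdx φ z * pdy (pdx χ) z - pdx χ z * pdy (pdx φ) z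
  let D : ℝ × ℝ → ℝ := fun z => pdx φ z * pdx (pdx χ) z - pdx χ z * pdx (pdx φ) z
  let B' : ℝ × ℝ → ℝ := fun z => pdy φ z * pdy (pdx χ) z - pdy χ z * pdy (pdx φ) z
  have hB : ∀ z ∈ U, B z = B' z := by
    intro z hz
    simp only [B, B']
    linear_combination -hJy z hz
  have hC : ∀ z ∈ U, C z = pdy φ z * pdx (pdx χ) z - pdy χ z * pdx (pdx φ) z := by
    intro z hz
    simp only [C]
    linear_combination -hJx z hz
  have mA : ∀ {a b c d : ℝ × ℝ → ℝ}, AnalyticOnNhd ℝ a U → AnalyticOnNhd ℝ b U →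
      AnalyticOnNhd ℝ c U → AnalyticOnNhd ℝ d U →
      AnalyticOnNhd ℝ (fun z => a z * b z - c z * d z) W := fun ha hb hc hd z hz =>
    ((ha z (hWU hz)).mul (hb z (hWU hz))).sub ((hc z (hWU hz)).mul (hd z (hWU hz)))
  refine ⟨A, B, C, D, mA hφy hχyy hχy hφyy, mA hφx hχyy hχx hφyy, mA hφx hχxy hχx hφxy,
    mA hφx hχxx hχx hφxx, ?_, ?_, ?_, ?_⟩
  · intro x0 y0 p0 h0
    obtain ⟨ε, hε, c, hca, hc0, hcp, hcW, hcf⟩ := exists_solution hW hf (p0 := p0) h0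
    have hx0 : x0 ∈ Metric.ball x0 ε := Metric.mem_ball_self hε
    obtain ⟨a, b, k, hab, hl⟩ := hline (Metric.ball x0 ε) Metric.isOpen_ball
      (convex_ball x0 ε).ordConnected c hca hcW hcf
    have hz0 : (x0, y0) ∈ U := hWU h0
    -- derivatives along the curve
    have hd : ∀ g : ℝ × ℝ → ℝ, AnalyticOnNhd ℝ g U → ∀ x ∈ Metric.ball x0 ε,
        HasDerivAt (fun t => g (t, c t)) (pdx g (x, c x) + deriv c x * pdy g (x, c x)) x :=
      fun g hg x hx => hasDerivAt_graph (hg _ (hWU (hcW x hx))).differentiableAt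
        (hca x hx).differentiableAt.hasDerivAt
    have hl1 : ∀ x ∈ Metric.ball x0 ε,
        a * (pdx χ (x, c x) + deriv c x * pdy χ (x, c x))
          + b * (pdx φ (x, c x) + deriv c x * pdy φ (x, c x)) = 0 := by
      intro x hx
      have h1 := ((hd χ hχ x hx).const_mul a).fun_add ((hd φ hφ x hx).const_mul b)
      have h2 : (fun t => a * χ (t, c t) + b * φ (t, c t)) =ᶠ[nhds x] fun _ => k := by
        filter_upwards [Metric.isOpen_ball.mem_nhds hx] with t ht using hl t ht
      exact h1.unique ((hasDerivAt_const x k).congr_of_eventuallyEq h2)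
    have hcc : HasDerivAt (deriv c) (f (x0, y0, p0)) x0 := by
      have := (hca x0 hx0).deriv.differentiableAt.hasDerivAt
      rwa [hcf x0 hx0, hc0, hcp] at this
    have hl2 := by
      have h1 := ((((hd _ hχx x0 hx0).fun_add (hcc.fun_mul (hd _ hχy x0 hx0))).const_mul a).fun_add
        (((hd _ hφx x0 hx0).fun_add (hcc.fun_mul (hd _ hφy x0 hx0))).const_mul b))
      have h2 : (fun x => a * (pdx χ (x, c x) + deriv c x * pdy χ (x, c x))
          + b * (pdx φ (x, c x) + deriv c x * pdy φ (x, c x))) =ᶠ[nhds x0] fun _ => 0 := by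
        filter_upwards [Metric.isOpen_ball.mem_nhds hx0] with t ht using hl1 t ht
      exact h1.unique ((hasDerivAt_const x0 0).congr_of_eventuallyEq h2)
    have hl1' := hl1 x0 hx0
    rw [hc0, hcp] at hl1' hl2
    rw [sχ _ hz0, sφ _ hz0] at hl2
    have hJ0 := hJ _ hz0
    have hB0 := hB _ hz0
    have hC0 := hC _ hz0
    simp only [A, B, C, D, B'] at hB0 hC0 ⊢
    generalize f (x0, y0, p0) = q at *
    generalize pdx χ (x0, y0) = cx at *
    generalize pdy χ (x0, y0) = cy at *
    generalize pdx φ (x0, y0) = fx at *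
    generalize pdy φ (x0, y0) = fy at *
    generalize pdx (pdx χ) (x0, y0) = cxx at *
    generalize pdy (pdx χ) (x0, y0) = cxy at *
    generalize pdy (pdy χ) (x0, y0) = cyy at *
    generalize pdx (pdx φ) (x0, y0) = fxx at *
    generalize pdy (pdx φ) (x0, y0) = fxy at *
    generalize pdy (pdy φ) (x0, y0) = fyy at *
    have hdet : (cx + p0 * cy) * (fxx + p0 * fxy + (q * fy + p0 * (fxy + p0 * fyy)))
        - (fx + p0 * fy) * (cxx + p0 * cxy + (q * cy + p0 * (cxy + p0 * cyy))) = 0 := by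
      by_cases ha : a = 0
      · have hb : b ≠ 0 := by
          rintro rfl
          exact hab (by rw [ha])
        apply mul_left_cancel₀ hb
        linear_combination (cx + p0 * cy) * hl2 -
          (cxx + p0 * cxy + (q * cy + p0 * (cxy + p0 * cyy))) * hl1'
      · apply mul_left_cancel₀ ha
        linear_combination (fxx + p0 * fxy + (q * fy + p0 * (fxy + p0 * fyy))) * hl1'
          - (fx + p0 * fy) * hl2
    linear_combination hdet - q * hJ0 - p0 ^ 2 * 2 * hB0 - p0 * hC0
  · intro z hzW
    have hz := hWU hzW
    have e1 : pdy D z = _ := pdy_br (hφx z hz).differentiableAt (hχxx z hz).differentiableAt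
      (hχx z hz).differentiableAt (hφxx z hz).differentiableAt
    have e2 : pdx C z = _ := pdx_br (hφx z hz).differentiableAt (hχxy z hz).differentiableAt
      (hχx z hz).differentiableAt (hφxy z hz).differentiableAt
    rw [pd_symm (hχx z hz), pd_symm (hφx z hz)] at e2
    have hJ0 := hJ z hz
    have hB0 := hB z hz
    have hC0 := hC z hz
    rw [e1, e2]
    simp only [A, B, C, D, B'] at hB0 hC0 ⊢
    linear_combination
      -2 * (pdx (pdx χ) z * pdy (pdx φ) z - pdx (pdx φ) z * pdy (pdx χ) z) * hJ0
      - 2 * (pdx φ z * pdx (pdx χ) z - pdx χ z * pdx (pdx φ) z) * hB0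
      + 2 * (pdx φ z * pdy (pdx χ) z - pdx χ z * pdy (pdx φ) z) * hC0
  · intro z hzW
    have hz := hWU hzW
    have e1 : pdy C z = _ := pdy_br (hφx z hz).differentiableAt (hχxy z hz).differentiableAt
      (hχx z hz).differentiableAt (hφxy z hz).differentiableAt
    have e2 : pdx B z = _ := pdx_br (hφx z hz).differentiableAt (hχyy z hz).differentiableAt
      (hχx z hz).differentiableAt (hφyy z hz).differentiableAt
    rw [pd_symm (hχy z hz), pd_symm (hφy z hz), pdy_congr hU sχ hz, pdy_congr hU sφ hz] at e2
    have hJ0 := hJ z hz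
    have hC0 := hC z hz
    rw [e1, e2]
    simp only [A, B, C, D] at hC0 ⊢
    linear_combination
      -(pdx (pdx χ) z * pdy (pdy φ) z - pdx (pdx φ) z * pdy (pdy χ) z) * hJ0
      + (pdx φ z * pdy (pdy χ) z - pdx χ z * pdy (pdy φ) z) * hC0
  · intro z hzW
    have hz := hWU hzW
    have e1 : pdy B z = _ := (pdy_congr hU hB hz).trans
      (pdy_br (hφy z hz).differentiableAt (hχxy z hz).differentiableAt
        (hχy z hz).differentiableAt (hφxy z hz).differentiableAt)
    have e2 : pdx A z = _ := pdx_br (hφy z hz).differentiableAt (hχyy z hz).differentiableAt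
      (hχy z hz).differentiableAt (hφyy z hz).differentiableAt
    rw [pd_symm (hχy z hz), pd_symm (hφy z hz), pdy_congr hU sχ hz, pdy_congr hU sφ hz,
      sχ z hz, sφ z hz] at e2
    have hJ0 := hJ z hz
    have hB0 := hB z hz
    rw [e1, e2]
    simp only [A, B, C, B'] at hB0 ⊢
    linear_combination
      -2 * (pdy (pdx χ) z * pdy (pdy φ) z - pdy (pdx φ) z * pdy (pdy χ) z) * hJ0
      + 2 * (pdx φ z * pdy (pdy χ) z - pdx χ z * pdy (pdy φ) z) * hB0
end

section
/- (Sufficiency of the linearizability conditions.) Let W ⊆ ℝ² be open, let A, B, C, D : W → ℝ be real-analytic functions satisfying D_y − C_x = 2(BD − C²), C_y − B_x = AD − BC, and B_y − A_x = 2(AC − B²) on W, and let f : W × ℝ → ℝ be defined by f(x,y,p) = A(x,y)p³ + 3B(x,y)p² + 3C(x,y)p + D(x,y). Then for every point (x₀, y₀) ∈ W there exist an open neighborhood U₀ ⊆ W of (x₀, y₀) and real-analytic functions χ, φ : U₀ → ℝ with χ_x φ_y − χ_y φ_x ≡ 1 on U₀, such that for every open interval I and every twice differentiable solution c : I → ℝ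 of c''(x) = f(x, c(x), c'(x)) with (x, c(x)) ∈ U₀ for all x ∈ I, there exist (a, b, k) ∈ ℝ³ with (a, b) ≠ (0,0) satisfying a·χ(x, c(x)) + b·φ(x, c(x)) = k for all x ∈ I. -/
section Helpers

open Topology Set


noncomputable def liftMono {R : Type*} [NormedAddCommGroup R] [NormedSpace ℝ R] (n : ℕ) :
    R →L[ℝ] C(unitInterval, R) :=
  LinearMap.mkContinuous
    { toFun := fun x => ⟨fun s => (s : ℝ) ^ n • x, by fun_prop⟩
      map_add' := fun x y => by ext s; simp
      map_smul' := fun c x => by ext s; exact smul_comm _ _ _ } 1 (by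
    intro x
    rw [one_mul]
    refine (ContinuousMap.norm_le _ (norm_nonneg x)).2 fun s => ?_
    simp only [LinearMap.coe_mk, AddHom.coe_mk, ContinuousMap.coe_mk, norm_smul, norm_pow]
    have h : ‖(s : ℝ)‖ ≤ 1 := by
      rw [Real.norm_eq_abs, abs_of_nonneg s.2.1]; exact s.2.2
    calc ‖(s : ℝ)‖ ^ n * ‖x‖ ≤ 1 * ‖x‖ := by
          gcongr; exact pow_le_one₀ (norm_nonneg _) h
      _ = ‖x‖ := one_mul _)

theorem liftMono_apply {R : Type*} [NormedAddCommGroup R] [NormedSpace ℝ R] (n : ℕ) (x : R)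
    (s : unitInterval) : liftMono n x s = (s : ℝ) ^ n • x := rfl

theorem liftMono_norm {R : Type*} [NormedAddCommGroup R] [NormedSpace ℝ R] (n : ℕ) :
    ‖(liftMono n : R →L[ℝ] C(unitInterval, R))‖ ≤ 1 :=
  LinearMap.mkContinuous_norm_le _ zero_le_one _

theorem exists_lift {E R : Type*} [NormedAddCommGroup E] [NormedSpace ℝ E]
    [NormedAddCommGroup R] [NormedSpace ℝ R] [CompleteSpace R] (f : E → R)
    (hf : AnalyticAt ℝ f 0) :
    ∃ F : E → C(unitInterval, R), AnalyticAt ℝ F 0 ∧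
      ∀ᶠ z in 𝓝 (0 : E), ∀ s : unitInterval, F z s = f ((s : ℝ) • z) := by
  obtain ⟨p, r, hp⟩ := hf
  let q : FormalMultilinearSeries ℝ E C(unitInterval, R) := fun n =>
    (liftMono n).compContinuousMultilinearMap (p n)
  have hq : ∀ n, ‖q n‖ ≤ ‖p n‖ := fun n => by
    refine (ContinuousLinearMap.norm_compContinuousMultilinearMap_le _ _).trans ?_
    calc _ ≤ 1 * ‖p n‖ := by gcongr; exact liftMono_norm n
      _ = _ := one_mul _
  have hrad : p.radius ≤ q.radius := by
    refine ENNReal.le_of_forall_nnreal_lt fun ρ hρ => ?_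
    obtain ⟨K, hK, h⟩ := p.norm_mul_pow_le_of_lt_radius hρ
    exact q.le_radius_of_bound K fun n => le_trans (by gcongr; exact hq n) (h n)
  have hpr : r ≤ p.radius := hp.r_le
  have hpos : 0 < q.radius := hp.r_pos.trans_le (hpr.trans hrad)
  have hQ := q.hasFPowerSeriesOnBall hpos
  refine ⟨q.sum, hQ.analyticAt, ?_⟩
  filter_upwards [Metric.eball_mem_nhds (0 : E) hp.r_pos] with z hz s
  have hz' : z ∈ Metric.eball (0 : E) q.radius :=
    Metric.eball_subset_eball (hpr.trans hrad) hz
  have h1 := hQ.hasSum hz'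
  rw [zero_add] at h1
  have h2 := (ContinuousMap.evalCLM ℝ s : C(unitInterval, R) →L[ℝ] R).hasSum h1
  have hsz : (s : ℝ) • z ∈ Metric.eball (0 : E) r := by
    rw [Metric.mem_eball, edist_zero_right] at hz ⊢
    refine lt_of_le_of_lt ?_ hz
    rw [enorm_le_iff_norm_le, norm_smul]
    have h : ‖(s : ℝ)‖ ≤ 1 := by
      rw [Real.norm_eq_abs, abs_of_nonneg s.2.1]; exact s.2.2
    calc _ ≤ 1 * ‖z‖ := by gcongr
      _ = ‖z‖ := one_mul _
  have h3 := hp.hasSum hsz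
  rw [zero_add] at h3
  refine h2.unique ?_
  convert h3 using 2 with n
  have : (p n fun _ => (s : ℝ) • z) = (s : ℝ) ^ n • p n fun _ => z := by
    rw [(p n).map_smul_univ (fun _ => (s : ℝ)) (fun _ => z)]; simp
  rw [this]
  rfl

noncomputable def volt {R : Type*} [NormedAddCommGroup R] [NormedSpace ℝ R]
    [CompleteSpace R] : C(unitInterval, R) →L[ℝ] C(unitInterval, R) :=
  LinearMap.mkContinuous
    { toFun := fun f => ⟨fun t => ∫ s in (0 : ℝ)..t, IccExtend zero_le_one f s, by
        have h : Continuous (IccExtend (zero_le_one (α := ℝ)) f) := f.continuous.Icc_extend'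
        have := intervalIntegral.continuous_primitive (μ := MeasureTheory.volume)
          (fun a b => h.intervalIntegrable a b) 0
        exact this.comp continuous_subtype_val⟩
      map_add' := fun f g => by
        ext t
        have hf : Continuous (IccExtend (zero_le_one (α := ℝ)) f) := f.continuous.Icc_extend'
        have hg : Continuous (IccExtend (zero_le_one (α := ℝ)) g) := g.continuous.Icc_extend'
        exact intervalIntegral.integral_add (hf.intervalIntegrable _ _)
          (hg.intervalIntegrable _ _)
      map_smul' := fun c f => by
        ext t
        exact intervalIntegral.integral_smul c _ } 1 (by
    intro f
    rw [one_mul]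
    refine (ContinuousMap.norm_le _ (norm_nonneg f)).2 fun t => ?_
    have h := intervalIntegral.norm_integral_le_of_norm_le_const (a := 0) (b := (t : ℝ))
      (f := IccExtend (zero_le_one (α := ℝ)) f) (C := ‖f‖) (fun s _ => f.norm_coe_le_norm _)
    refine h.trans ?_
    have h : |(t : ℝ) - 0| ≤ 1 := by
      rw [sub_zero, abs_of_nonneg t.2.1]; exact t.2.2
    calc _ ≤ ‖f‖ * 1 := by gcongr
      _ = ‖f‖ := mul_one _)

theorem volt_apply {R : Type*} [NormedAddCommGroup R] [NormedSpace ℝ R]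
    [CompleteSpace R] (f : C(unitInterval, R)) (t : unitInterval) :
    volt f t = ∫ s in (0 : ℝ)..t, IccExtend zero_le_one f s := rfl

noncomputable def cmul {R G : Type*} [NormedAddCommGroup R] [NormedSpace ℝ R]
    [NormedAddCommGroup G] [NormedSpace ℝ G] (β : R →L[ℝ] G →L[ℝ] G) :
    C(unitInterval, R) →L[ℝ] C(unitInterval, G) →L[ℝ] C(unitInterval, G) :=
  LinearMap.mkContinuous₂
    (LinearMap.mk₂ ℝ (fun (f : C(unitInterval, R)) (g : C(unitInterval, G)) =>
        (⟨fun t => β (f t) (g t), by fun_prop⟩ : C(unitInterval, G)))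
      (fun f g h => by ext t; simp) (fun c f g => by ext t; simp)
      (fun f g h => by ext t; simp) (fun c f g => by ext t; simp)) ‖β‖ (by
    intro f g
    refine (ContinuousMap.norm_le _ (by positivity)).2 fun t => ?_
    refine (β.le_opNorm₂ (f t) (g t)).trans ?_
    gcongr
    · exact f.norm_coe_le_norm t
    · exact g.norm_coe_le_norm t)

theorem cmul_apply {R G : Type*} [NormedAddCommGroup R] [NormedSpace ℝ R]
    [NormedAddCommGroup G] [NormedSpace ℝ G] (β : R →L[ℝ] G →L[ℝ] G)
    (f : C(unitInterval, R)) (g : C(unitInterval, G)) (t : unitInterval) :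
    cmul β f g t = β (f t) (g t) := rfl

theorem exists_solveOp {E X : Type*} [NormedAddCommGroup E] [NormedSpace ℝ E]
    [NormedAddCommGroup X] [NormedSpace ℝ X] [CompleteSpace X] (K : E → X →L[ℝ] X)
    (hK : AnalyticAt ℝ K 0) (hK0 : K 0 = 0) (e : X) :
    ∃ W : E → X, AnalyticAt ℝ W 0 ∧ W 0 = e ∧
      ∀ᶠ z in 𝓝 (0 : E), (W z - K z (W z) = e) ∧ ∀ w, w - K z w = e → w = W z := by
  let T : E → X →L[ℝ] X := fun z => 1 - K z
  have hT : AnalyticAt ℝ T 0 := analyticAt_const.sub hK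
  have hT0 : T 0 = 1 := by simp [T, hK0]
  let W : E → X := fun z => Ring.inverse (T z) e
  have hW : AnalyticAt ℝ W 0 := by
    have h1 : AnalyticAt ℝ (fun z => Ring.inverse (T z)) 0 := by
      refine AnalyticAt.comp (g := Ring.inverse) ?_ hT
      rw [hT0]
      exact analyticAt_inverse (𝕜 := ℝ) (1 : (X →L[ℝ] X)ˣ)
    exact ((ContinuousLinearMap.apply ℝ _ e).analyticAt _).comp h1
  have hU : ∀ᶠ z in 𝓝 (0 : E), IsUnit (T z) := by
    have : {x : X →L[ℝ] X | IsUnit x} ∈ 𝓝 (T 0) := by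
      rw [hT0]; exact Units.isOpen.mem_nhds isUnit_one
    exact hT.continuousAt this
  refine ⟨W, hW, by simp [W, hT0], ?_⟩
  filter_upwards [hU] with z hu
  constructor
  · change (T z * Ring.inverse (T z)) e = e
    rw [Ring.mul_inverse_cancel _ hu]; rfl
  · intro w h
    calc w = (Ring.inverse (T z) * T z) w := by rw [Ring.inverse_mul_cancel _ hu]; rfl
      _ = Ring.inverse (T z) (T z w) := rfl
      _ = W z := by change Ring.inverse (T z) (w - K z w) = _; rw [h]

theorem exists_radial {R G : Type*} [NormedAddCommGroup R] [NormedSpace ℝ R] [CompleteSpace R]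
    [NormedAddCommGroup G] [NormedSpace ℝ G] [CompleteSpace G] (β : R →L[ℝ] G →L[ℝ] G)
    (M N : ℝ × ℝ → R) (hM : AnalyticAt ℝ M 0) (hN : AnalyticAt ℝ N 0) (e : G) :
    ∃ V : ℝ × ℝ → G, AnalyticAt ℝ V 0 ∧ V 0 = e ∧
      ∀ᶠ z in 𝓝 (0 : ℝ × ℝ), fderiv ℝ V z z = β (z.1 • M z + z.2 • N z) (V z) := by
  obtain ⟨M', hM', hMe⟩ := exists_lift M hM
  obtain ⟨N', hN', hNe⟩ := exists_lift N hN
  let a : ℝ × ℝ → C(unitInterval, R) := fun z => z.1 • M' z + z.2 • N' z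
  have ha : AnalyticAt ℝ a 0 :=
    (analyticAt_fst.smul hM').add (analyticAt_snd.smul hN')
  let K : ℝ × ℝ → (C(unitInterval, G) →L[ℝ] C(unitInterval, G)) := fun z => volt ∘L cmul β (a z)
  let P : C(unitInterval, R) →L[ℝ] (C(unitInterval, G) →L[ℝ] C(unitInterval, G)) :=
    (ContinuousLinearMap.compL ℝ C(unitInterval, G) C(unitInterval, G) C(unitInterval, G) volt) ∘L
      cmul β
  have hP : AnalyticAt ℝ P (a 0) := by
    have h := ContinuousLinearMap.analyticAt (𝕜 := ℝ) (E := C(unitInterval, R)) (F := C(unitInterval, G) →L[ℝ] C(unitInterval, G)) P (a 0)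
    exact h
  have hK : AnalyticAt ℝ K 0 := hP.comp ha
  have hK0 : K 0 = 0 := by
    ext f t
    simp [K, a]
  obtain ⟨W, hW, hW0, hU⟩ := exists_solveOp K hK hK0 (ContinuousMap.const _ e)
  let V : ℝ × ℝ → G := fun z => W z 1
  have hV : AnalyticAt ℝ V 0 :=
    ((ContinuousMap.evalCLM ℝ (1 : unitInterval) : C(unitInterval, G) →L[ℝ] G).analyticAt _).comp hW
  have hV0 : V 0 = e := by simp [V, hW0]
  refine ⟨V, hV, hV0, ?_⟩
  obtain ⟨ε, hε, hball⟩ := Metric.eventually_nhds_iff_ball.1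
    (hMe.and (hNe.and (hU.and hV.eventually_analyticAt)))
  -- the integral equation
  have hW1 : ∀ z ∈ Metric.ball (0 : ℝ × ℝ) ε, ∀ t, W z t = e + volt (cmul β (a z) (W z)) t := by
    intro z hz t
    have h2 : W z - volt (cmul β (a z) (W z) ) = ContinuousMap.const _ e := (hball z hz).2.2.1.1
    rw [sub_eq_iff_eq_add] at h2
    have := congrArg (fun g : C(unitInterval, G) => g t) h2
    simpa using this
  have huniq : ∀ z ∈ Metric.ball (0 : ℝ × ℝ) ε, ∀ w : C(unitInterval, G),
      (∀ t, w t = e + volt (cmul β (a z) w) t) → w = W z := by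
    intro z hz w hw
    refine (hball z hz).2.2.1.2 w ?_
    change w - volt (cmul β (a z) w) = ContinuousMap.const _ e
    ext t
    simp [hw t]
  have hball_smul : ∀ z ∈ Metric.ball (0 : ℝ × ℝ) ε, ∀ t : unitInterval,
      (t : ℝ) • z ∈ Metric.ball (0 : ℝ × ℝ) ε := by
    intro z hz t
    rw [mem_ball_zero_iff] at hz ⊢
    refine lt_of_le_of_lt ?_ hz
    rw [norm_smul, Real.norm_eq_abs, abs_of_nonneg t.2.1]
    exact mul_le_of_le_one_left (norm_nonneg _) t.2.2
  have haz : ∀ z ∈ Metric.ball (0 : ℝ × ℝ) ε, ∀ s : unitInterval,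
      a z s = z.1 • M ((s : ℝ) • z) + z.2 • N ((s : ℝ) • z) := by
    intro z hz s
    simp [a, (hball z hz).1 s, (hball z hz).2.1 s]
  have hscale : ∀ z ∈ Metric.ball (0 : ℝ × ℝ) ε, ∀ t : unitInterval,
      W z t = V ((t : ℝ) • z) := by
    intro z hz t
    let w : C(unitInterval, G) := ⟨fun s => W z (t * s), by fun_prop⟩
    have hw : w = W ((t : ℝ) • z) := by
      refine huniq _ (hball_smul z hz t) w fun s => ?_
      change W z (t * s) = _
      rw [hW1 z hz, volt_apply, volt_apply]
      congr 1
      have h1 : (∫ σ in (0 : ℝ)..s, IccExtend zero_le_one (cmul β (a ((t : ℝ) • z)) w) σ)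
          = ∫ σ in (0 : ℝ)..s, (t : ℝ) • IccExtend zero_le_one (cmul β (a z) (W z)) ((t : ℝ) * σ) := by
        refine intervalIntegral.integral_congr fun σ hσ => ?_
        rw [uIcc_of_le s.2.1] at hσ
        have hσ' : σ ∈ Icc (0 : ℝ) 1 := ⟨hσ.1, hσ.2.trans s.2.2⟩
        have htσ : (t : ℝ) * σ ∈ Icc (0 : ℝ) 1 := (t * ⟨σ, hσ'⟩ : unitInterval).2
        change IccExtend zero_le_one (cmul β (a ((t : ℝ) • z)) w) σ =
          (t : ℝ) • IccExtend zero_le_one (cmul β (a z) (W z)) ((t : ℝ) * σ)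
        rw [IccExtend_of_mem _ _ hσ', IccExtend_of_mem _ _ htσ]
        simp only [cmul_apply]
        rw [haz z hz, haz _ (hball_smul z hz t)]
        have : w ⟨σ, hσ'⟩ = W z ⟨(t : ℝ) * σ, htσ⟩ := rfl
        rw [this]
        simp [smul_smul, mul_comm]
      rw [h1, intervalIntegral.integral_smul, intervalIntegral.smul_integral_comp_mul_left]
      simp
    change W z t = W ((t : ℝ) • z) 1
    rw [← hw]
    change _ = W z (t * 1)
    rw [mul_one]
  refine Metric.eventually_nhds_iff_ball.2 ⟨ε / 2, by positivity, fun y hy => ?_⟩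
  -- `y = (1/2) • z`
  set z : ℝ × ℝ := (2 : ℝ) • y with hzdef
  have hz : z ∈ Metric.ball (0 : ℝ × ℝ) ε := by
    rw [mem_ball_zero_iff] at hy ⊢
    rw [hzdef, norm_smul]; norm_num; linarith
  have hyz : (1 / 2 : ℝ) • z = y := by rw [hzdef, smul_smul]; norm_num
  have hyε : y ∈ Metric.ball (0 : ℝ × ℝ) ε := Metric.ball_subset_ball (by linarith) hy
  have hhalf : (1 / 2 : ℝ) ∈ Icc (0 : ℝ) 1 := by constructor <;> norm_num
  have hc : Continuous (IccExtend (zero_le_one (α := ℝ)) (cmul β (a z) (W z))) :=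
    (cmul β (a z) (W z)).continuous.Icc_extend'
  have hd1 : HasDerivAt (fun t : ℝ => e + ∫ s in (0 : ℝ)..t, IccExtend zero_le_one (cmul β (a z) (W z)) s)
      (IccExtend (zero_le_one (α := ℝ)) (cmul β (a z) (W z)) (1 / 2)) (1 / 2) :=
    (intervalIntegral.integral_hasDerivAt_right (hc.intervalIntegrable _ _)
      (hc.stronglyMeasurableAtFilter _ _) hc.continuousAt).const_add e
  have hd2 : HasDerivAt (fun t : ℝ => V (t • z)) (fderiv ℝ V y z) (1 / 2) := by
    have h1 : HasFDerivAt V (fderiv ℝ V y) ((1 / 2 : ℝ) • z) := by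
      rw [hyz]; exact (hball y hyε).2.2.2.differentiableAt.hasFDerivAt
    have h2 : HasDerivAt (fun t : ℝ => t • z) z (1 / 2) := by
      simpa using (hasDerivAt_id (1 / 2 : ℝ)).smul_const z
    exact h1.comp_hasDerivAt (1 / 2 : ℝ) h2
  have heq : (fun t : ℝ => V (t • z)) =ᶠ[𝓝 (1 / 2)]
      (fun t : ℝ => e + ∫ s in (0 : ℝ)..t, IccExtend zero_le_one (cmul β (a z) (W z)) s) := by
    filter_upwards [Icc_mem_nhds (a := (0 : ℝ)) (b := 1) (x := 1 / 2) (by norm_num) (by norm_num)]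
      with t ht
    rw [← hscale z hz ⟨t, ht⟩, hW1 z hz, volt_apply]
  have hfin := hd2.unique (hd1.congr_of_eventuallyEq heq)
  rw [IccExtend_of_mem _ _ hhalf, cmul_apply, haz z hz, hscale z hz] at hfin
  simp only [hyz] at hfin
  have : fderiv ℝ V y y = (1 / 2 : ℝ) • fderiv ℝ V y z := by
    rw [← map_smul, hyz]
  rw [this, hfin]
  simp [hzdef, smul_smul]

theorem radial_unique {G : Type*} [NormedAddCommGroup G] [NormedSpace ℝ G]
    (M N : ℝ × ℝ → G →L[ℝ] G) (Q : ℝ × ℝ → G) (ε K : ℝ)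
    (hM : ∀ z ∈ Metric.ball (0 : ℝ × ℝ) ε, ‖M z‖ ≤ K)
    (hN : ∀ z ∈ Metric.ball (0 : ℝ × ℝ) ε, ‖N z‖ ≤ K)
    (hQ : ∀ z ∈ Metric.ball (0 : ℝ × ℝ) ε, DifferentiableAt ℝ Q z)
    (h : ∀ z ∈ Metric.ball (0 : ℝ × ℝ) ε,
      fderiv ℝ Q z z = - Q z + (z.1 • M z (Q z) + z.2 • N z (Q z))) :
    ∀ z ∈ Metric.ball (0 : ℝ × ℝ) ε, Q z = 0 := by
  intro z hz
  have hb : ∀ t ∈ Icc (0 : ℝ) 1, t • z ∈ Metric.ball (0 : ℝ × ℝ) ε := by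
    intro t ht
    rw [mem_ball_zero_iff] at hz ⊢
    refine lt_of_le_of_lt ?_ hz
    rw [norm_smul, Real.norm_eq_abs, abs_of_nonneg ht.1]
    exact mul_le_of_le_one_left (norm_nonneg _) ht.2
  let ρ : ℝ → G := fun t => t • Q (t • z)
  let ρ' : ℝ → G := fun t => Q (t • z) + fderiv ℝ Q (t • z) (t • z)
  have hd : ∀ t ∈ Icc (0 : ℝ) 1, HasDerivAt ρ (ρ' t) t := by
    intro t ht
    have h1 : HasFDerivAt Q (fderiv ℝ Q (t • z)) (t • z) := (hQ _ (hb t ht)).hasFDerivAt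
    have h2 : HasDerivAt (fun t : ℝ => t • z) z t := by
      simpa using (hasDerivAt_id t).smul_const z
    have h3 : HasDerivAt (fun t : ℝ => Q (t • z)) (fderiv ℝ Q (t • z) z) t :=
      h1.comp_hasDerivAt t h2
    have h4 := (hasDerivAt_id t).smul h3
    refine h4.congr_deriv ?_
    simp [ρ', add_comm]
  have hbound : ∀ t ∈ Ico (0 : ℝ) 1, ‖ρ' t‖ ≤ ((|z.1| + |z.2|) * K) * ‖ρ t‖ := by
    intro t ht
    have ht' : t ∈ Icc (0 : ℝ) 1 := ⟨ht.1, ht.2.le⟩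
    have hz' := hb t ht'
    have e : ρ' t = z.1 • M (t • z) (ρ t) + z.2 • N (t • z) (ρ t) := by
      simp only [ρ', ρ, h _ hz']
      simp [smul_smul, mul_comm]
    rw [e]
    calc _ ≤ ‖z.1 • M (t • z) (ρ t)‖ + ‖z.2 • N (t • z) (ρ t)‖ := norm_add_le _ _
      _ ≤ |z.1| * (K * ‖ρ t‖) + |z.2| * (K * ‖ρ t‖) := by
        rw [norm_smul, norm_smul, Real.norm_eq_abs, Real.norm_eq_abs]
        gcongr
        · exact ((M (t • z)).le_opNorm _).trans (by gcongr; exact hM _ hz')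
        · exact ((N (t • z)).le_opNorm _).trans (by gcongr; exact hN _ hz')
      _ = _ := by ring
  have := eq_zero_of_abs_deriv_le_mul_abs_self_of_eq_zero_right (f := ρ) (f' := ρ')
    (fun t ht => (hd t ht).continuousAt.continuousWithinAt)
    (fun t ht => (hd t ⟨ht.1, ht.2.le⟩).hasDerivWithinAt) (by simp [ρ]) hbound 1 (by simp)
  simpa [ρ] using this

theorem linear_frobenius {G : Type*} [NormedAddCommGroup G] [NormedSpace ℝ G] [CompleteSpace G]
    (M N : ℝ × ℝ → G →L[ℝ] G) (hM : AnalyticAt ℝ M 0) (hN : AnalyticAt ℝ N 0) (e : G)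
    (hflat : ∀ᶠ z in 𝓝 (0 : ℝ × ℝ), ∀ v : G,
      fderiv ℝ M z (0, 1) v + M z (N z v) = fderiv ℝ N z (1, 0) v + N z (M z v)) :
    ∃ V : ℝ × ℝ → G, AnalyticAt ℝ V 0 ∧ V 0 = e ∧
      ∀ᶠ z in 𝓝 (0 : ℝ × ℝ), fderiv ℝ V z (1, 0) = M z (V z) ∧
        fderiv ℝ V z (0, 1) = N z (V z) := by
  obtain ⟨V, hV, hV0, hrad⟩ := exists_radial (ContinuousLinearMap.id ℝ (G →L[ℝ] G)) M N hM hN e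
  refine ⟨V, hV, hV0, ?_⟩
  have hMb : ∀ᶠ z in 𝓝 (0 : ℝ × ℝ), ‖M z‖ ≤ max (‖M 0‖ + 1) (‖N 0‖ + 1) := by
    filter_upwards [hM.continuousAt.norm.eventually (gt_mem_nhds (lt_add_one _))] with z hz
    exact le_max_of_le_left hz.le
  have hNb : ∀ᶠ z in 𝓝 (0 : ℝ × ℝ), ‖N z‖ ≤ max (‖M 0‖ + 1) (‖N 0‖ + 1) := by
    filter_upwards [hN.continuousAt.norm.eventually (gt_mem_nhds (lt_add_one _))] with z hz
    exact le_max_of_le_right hz.le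
  obtain ⟨ε, hε, hball⟩ := Metric.eventually_nhds_iff_ball.1
    (hrad.and (hflat.and (hM.eventually_analyticAt.and (hN.eventually_analyticAt.and
      (hV.eventually_analyticAt.and (hMb.and hNb))))))
  let Q1 : ℝ × ℝ → G := fun z => fderiv ℝ V z (1, 0) - M z (V z)
  let Q2 : ℝ × ℝ → G := fun z => fderiv ℝ V z (0, 1) - N z (V z)
  have hVd : ∀ z ∈ Metric.ball (0 : ℝ × ℝ) ε, DifferentiableAt ℝ V z :=
    fun z hz => (hball z hz).2.2.2.2.1.differentiableAt
  have hMd : ∀ z ∈ Metric.ball (0 : ℝ × ℝ) ε, DifferentiableAt ℝ M z :=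
    fun z hz => (hball z hz).2.2.1.differentiableAt
  have hNd : ∀ z ∈ Metric.ball (0 : ℝ × ℝ) ε, DifferentiableAt ℝ N z :=
    fun z hz => (hball z hz).2.2.2.1.differentiableAt
  have hV'd : ∀ z ∈ Metric.ball (0 : ℝ × ℝ) ε, DifferentiableAt ℝ (fderiv ℝ V) z :=
    fun z hz => (hball z hz).2.2.2.2.1.fderiv.differentiableAt
  have hQ1 : ∀ z ∈ Metric.ball (0 : ℝ × ℝ) ε, DifferentiableAt ℝ Q1 z := by
    intro z hz
    have := hVd z hz; have := hMd z hz; have := hV'd z hz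
    fun_prop
  have hQ2 : ∀ z ∈ Metric.ball (0 : ℝ × ℝ) ε, DifferentiableAt ℝ Q2 z := by
    intro z hz
    have := hVd z hz; have := hNd z hz; have := hV'd z hz
    fun_prop
  have hQ1' : ∀ z ∈ Metric.ball (0 : ℝ × ℝ) ε, ∀ h, fderiv ℝ Q1 z h =
      fderiv ℝ (fderiv ℝ V) z h (1, 0) - (fderiv ℝ M z h (V z) + M z (fderiv ℝ V z h)) := by
    intro z hz h
    have e1 := (hV'd z hz).hasFDerivAt.clm_apply (hasFDerivAt_const ((1 : ℝ), (0 : ℝ)) z)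
    have e2 := (hMd z hz).hasFDerivAt.clm_apply (hVd z hz).hasFDerivAt
    have := (e1.sub e2).fderiv
    change fderiv ℝ Q1 z = _ at this
    rw [this]
    simp [add_comm]
  have hQ2' : ∀ z ∈ Metric.ball (0 : ℝ × ℝ) ε, ∀ h, fderiv ℝ Q2 z h =
      fderiv ℝ (fderiv ℝ V) z h (0, 1) - (fderiv ℝ N z h (V z) + N z (fderiv ℝ V z h)) := by
    intro z hz h
    have e1 := (hV'd z hz).hasFDerivAt.clm_apply (hasFDerivAt_const ((0 : ℝ), (1 : ℝ)) z)
    have e2 := (hNd z hz).hasFDerivAt.clm_apply (hVd z hz).hasFDerivAt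
    have := (e1.sub e2).fderiv
    change fderiv ℝ Q2 z = _ at this
    rw [this]
    simp [add_comm]
  have hdec : ∀ z : ℝ × ℝ, z = z.1 • ((1 : ℝ), (0 : ℝ)) + z.2 • ((0 : ℝ), (1 : ℝ)) := by
    intro z; ext <;> simp
  have hsplit : ∀ (L : ℝ × ℝ →L[ℝ] G) (z : ℝ × ℝ), L z = z.1 • L (1, 0) + z.2 • L (0, 1) := by
    intro L z
    conv_lhs => rw [hdec z]
    rw [map_add, map_smul, map_smul]
  have hxy : ∀ z ∈ Metric.ball (0 : ℝ × ℝ) ε, z.1 • Q1 z + z.2 • Q2 z = 0 := by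
    intro z hz
    have h := (hball z hz).1
    rw [hsplit] at h
    simp only [ContinuousLinearMap.id_apply, ContinuousLinearMap.add_apply,
      ContinuousLinearMap.smul_apply] at h
    simp only [Q1, Q2, smul_sub]
    rw [sub_add_sub_comm, h, sub_self]
  have hxy' : ∀ z ∈ Metric.ball (0 : ℝ × ℝ) ε, ∀ h : ℝ × ℝ,
      (z.1 • fderiv ℝ Q1 z h + h.1 • Q1 z) + (z.2 • fderiv ℝ Q2 z h + h.2 • Q2 z) = 0 := by
    intro z hz h
    have e1 := (hasFDerivAt_fst (𝕜 := ℝ) (p := z)).smul (hQ1 z hz).hasFDerivAt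
    have e2 := (hasFDerivAt_snd (𝕜 := ℝ) (p := z)).smul (hQ2 z hz).hasFDerivAt
    have e3 := e1.add e2
    have e4 : (fun z : ℝ × ℝ => z.1 • Q1 z + z.2 • Q2 z) =ᶠ[𝓝 z] fun _ => 0 := by
      filter_upwards [Metric.isOpen_ball.mem_nhds hz] with w hw using hxy w hw
    have e5 := e3.unique ((hasFDerivAt_const (0 : G) z).congr_of_eventuallyEq e4)
    have := congrArg (fun L : ℝ × ℝ →L[ℝ] G => L h) e5
    simpa using this
  have hcurl : ∀ z ∈ Metric.ball (0 : ℝ × ℝ) ε,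
      fderiv ℝ Q1 z (0, 1) - fderiv ℝ Q2 z (1, 0) = N z (Q1 z) - M z (Q2 z) := by
    intro z hz
    have hs : IsSymmSndFDerivAt ℝ V z :=
      ContDiffAt.isSymmSndFDerivAt_of_omega (hball z hz).2.2.2.2.1.contDiffAt
    have hs' := hs.eq (0, 1) (1, 0)
    have hf := (hball z hz).2.1 (V z)
    rw [hQ1' z hz, hQ2' z hz, hs']
    simp only [Q1, Q2, map_sub]
    have : ∀ a b c d f g h : G, b + c = d + f → a - (b + g) - (a - (d + h)) = (h - f) - (g - c) := by
      intro a b c d f g h hh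
      have : b = d + f - c := eq_sub_of_add_eq hh
      rw [this]; abel
    exact this _ _ _ _ _ _ _ hf
  have hz1 : ∀ z ∈ Metric.ball (0 : ℝ × ℝ) ε, Q1 z = 0 := by
    refine radial_unique M N Q1 ε _ (fun z hz => (hball z hz).2.2.2.2.2.1)
      (fun z hz => (hball z hz).2.2.2.2.2.2) hQ1 fun z hz => ?_
    have h1 := hxy' z hz (1, 0)
    have h2 := hcurl z hz
    have h3 := hxy z hz
    have h4 : z.1 • M z (Q1 z) + z.2 • M z (Q2 z) = 0 := by
      rw [← map_smul, ← map_smul, ← map_add, h3, map_zero]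
    simp only [one_smul, zero_smul, add_zero] at h1
    rw [hsplit, eq_add_of_sub_eq h2, eq_neg_of_add_eq_zero_left h4]
    rw [show z.1 • fderiv ℝ Q1 z (1, 0) = - Q1 z - z.2 • fderiv ℝ Q2 z (1, 0) by
      rw [← sub_eq_zero, ← h1]; abel]
    simp only [smul_add, smul_sub]
    abel
  have hz2 : ∀ z ∈ Metric.ball (0 : ℝ × ℝ) ε, Q2 z = 0 := by
    refine radial_unique M N Q2 ε _ (fun z hz => (hball z hz).2.2.2.2.2.1)
      (fun z hz => (hball z hz).2.2.2.2.2.2) hQ2 fun z hz => ?_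
    have h1 := hxy' z hz (0, 1)
    have h2 := hcurl z hz
    rw [hz1 z hz] at h1 h2
    have h5 : fderiv ℝ Q1 z (0, 1) = 0 := by
      have : Q1 =ᶠ[𝓝 z] fun _ => 0 := by
        filter_upwards [Metric.isOpen_ball.mem_nhds hz] with w hw using hz1 w hw
      rw [this.fderiv_eq]; simp
    rw [h5] at h1 h2
    simp only [one_smul, zero_smul, add_zero, zero_add, smul_zero, zero_sub, map_zero, neg_inj] at h1 h2
    have h3 := hxy z hz
    rw [hz1 z hz, smul_zero, zero_add] at h3
    rw [hsplit, h2, eq_neg_of_add_eq_zero_left h1, ← map_smul (N z), h3, map_zero]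
    abel
  filter_upwards [Metric.ball_mem_nhds _ hε] with z hz
  exact ⟨sub_eq_zero.1 (hz1 z hz), sub_eq_zero.1 (hz2 z hz)⟩

theorem exists_affine (W : Set (ℝ × ℝ)) (hW : IsOpen W)
    (A B C D : ℝ × ℝ → ℝ)
    (hA : AnalyticOnNhd ℝ A W) (hB : AnalyticOnNhd ℝ B W)
    (hC : AnalyticOnNhd ℝ C W) (hD : AnalyticOnNhd ℝ D W)
    (h1 : ∀ z ∈ W, pdy D z - pdx C z = 2 * (B z * D z - C z ^ 2))
    (h2 : ∀ z ∈ W, pdy C z - pdx B z = A z * D z - B z * C z)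
    (h3 : ∀ z ∈ W, pdy B z - pdx A z = 2 * (A z * C z - B z ^ 2))
    (z₀ : ℝ × ℝ) (hz₀ : z₀ ∈ W) (a₀ b₀ : ℝ) :
    ∃ u p q : ℝ × ℝ → ℝ, p z₀ = a₀ ∧ q z₀ = b₀ ∧ ∀ᶠ z in 𝓝 z₀,
      (AnalyticAt ℝ u z ∧ AnalyticAt ℝ p z ∧ AnalyticAt ℝ q z) ∧
      (pdx u z = p z ∧ pdy u z = q z) ∧
      (pdx p z = C z * p z - D z * q z ∧ pdy p z = B z * p z - C z * q z) ∧
      (pdx q z = B z * p z - C z * q z ∧ pdy q z = A z * p z - B z * q z) := by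
  let x1 : ℝ × ℝ × ℝ →L[ℝ] ℝ := ContinuousLinearMap.fst ℝ ℝ (ℝ × ℝ)
  let x2 : ℝ × ℝ × ℝ →L[ℝ] ℝ :=
    (ContinuousLinearMap.fst ℝ ℝ ℝ) ∘L (ContinuousLinearMap.snd ℝ ℝ (ℝ × ℝ))
  let x3 : ℝ × ℝ × ℝ →L[ℝ] ℝ :=
    (ContinuousLinearMap.snd ℝ ℝ ℝ) ∘L (ContinuousLinearMap.snd ℝ ℝ (ℝ × ℝ))
  let K1 : ℝ × ℝ × ℝ →L[ℝ] ℝ × ℝ × ℝ := x2.prod ((0 : ℝ × ℝ × ℝ →L[ℝ] ℝ).prod 0)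
  let L1 : ℝ × ℝ × ℝ →L[ℝ] ℝ × ℝ × ℝ := x3.prod ((0 : ℝ × ℝ × ℝ →L[ℝ] ℝ).prod 0)
  let P : ℝ × ℝ × ℝ →L[ℝ] ℝ × ℝ × ℝ := (0 : ℝ × ℝ × ℝ →L[ℝ] ℝ).prod (x2.prod (-x3))
  let Q : ℝ × ℝ × ℝ →L[ℝ] ℝ × ℝ × ℝ := (0 : ℝ × ℝ × ℝ →L[ℝ] ℝ).prod ((-x3).prod 0)
  let S : ℝ × ℝ × ℝ →L[ℝ] ℝ × ℝ × ℝ := (0 : ℝ × ℝ × ℝ →L[ℝ] ℝ).prod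
    ((0 : ℝ × ℝ × ℝ →L[ℝ] ℝ).prod x2)
  let τ : ℝ × ℝ → ℝ × ℝ := fun z => z₀ + z
  have hτ : Filter.Tendsto τ (𝓝 0) (𝓝 z₀) := by
    have : Continuous τ := by fun_prop
    simpa [τ] using this.tendsto 0
  have hτa : ∀ z, AnalyticAt ℝ τ z := fun z => analyticAt_const.add analyticAt_id
  have hτW : ∀ᶠ z in 𝓝 (0 : ℝ × ℝ), τ z ∈ W := hτ (hW.mem_nhds hz₀)
  let M : ℝ × ℝ → (ℝ × ℝ × ℝ →L[ℝ] ℝ × ℝ × ℝ) := fun z =>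
    K1 + C (τ z) • P + D (τ z) • Q + B (τ z) • S
  let N : ℝ × ℝ → (ℝ × ℝ × ℝ →L[ℝ] ℝ × ℝ × ℝ) := fun z =>
    L1 + B (τ z) • P + C (τ z) • Q + A (τ z) • S
  have han : ∀ (f : ℝ × ℝ → ℝ), AnalyticOnNhd ℝ f W → ∀ (T : ℝ × ℝ × ℝ →L[ℝ] ℝ × ℝ × ℝ),
      AnalyticAt ℝ (fun z => f (τ z) • T) 0 := by
    intro f hf T
    have h0 : AnalyticAt ℝ f (τ 0) := by simpa [τ] using hf z₀ hz₀
    exact (h0.comp (hτa 0)).smul analyticAt_const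
  have hM : AnalyticAt ℝ M 0 :=
    ((analyticAt_const.add (han C hC P)).add (han D hD Q)).add (han B hB S)
  have hN : AnalyticAt ℝ N 0 :=
    ((analyticAt_const.add (han B hB P)).add (han C hC Q)).add (han A hA S)
  have hder : ∀ (f : ℝ × ℝ → ℝ), AnalyticOnNhd ℝ f W → ∀ (T : ℝ × ℝ × ℝ →L[ℝ] ℝ × ℝ × ℝ),
      ∀ z, τ z ∈ W → HasFDerivAt (fun z => f (τ z) • T) ((fderiv ℝ f (τ z)).smulRight T) z := by
    intro f hf T z hz
    have e1 : HasFDerivAt τ (ContinuousLinearMap.id ℝ (ℝ × ℝ)) z :=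
      (hasFDerivAt_id z).const_add z₀
    have e2 := (hf _ hz).differentiableAt.hasFDerivAt.comp z e1
    exact e2.smul_const T
  obtain ⟨V, hV, hV0, hVe⟩ := linear_frobenius M N hM hN (0, a₀, b₀) (by
    filter_upwards [hτW] with z hz v
    have e1 := (((hder C hC P z hz).const_add K1).add (hder D hD Q z hz)).add (hder B hB S z hz)
    have e2 := (((hder B hB P z hz).const_add L1).add (hder C hC Q z hz)).add (hder A hA S z hz)
    have e1' := e1.fderiv
    have e2' := e2.fderiv
    change fderiv ℝ M z = _ at e1'
    change fderiv ℝ N z = _ at e2'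
    rw [e1', e2']
    have g1 := h1 _ hz
    have g2 := h2 _ hz
    have g3 := h3 _ hz
    simp only [pdx, pdy] at g1 g2 g3
    obtain ⟨v1, v2, v3⟩ := v
    simp [M, N, K1, L1, P, Q, S, x2, x3]
    refine ⟨?_, ?_, ?_⟩
    · ring
    · linear_combination v2 * g2 - v3 * g1
    · linear_combination v2 * g3 - v3 * g2)
  let σ : ℝ × ℝ → ℝ × ℝ := fun z => z - z₀
  have hσ : Filter.Tendsto σ (𝓝 z₀) (𝓝 0) := by
    have : Continuous σ := by fun_prop
    simpa [σ] using this.tendsto z₀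
  have hσa : ∀ z, AnalyticAt ℝ σ z := fun z => analyticAt_id.sub analyticAt_const
  have hpd : ∀ (x : ℝ × ℝ × ℝ →L[ℝ] ℝ) (z : ℝ × ℝ), AnalyticAt ℝ V (σ z) →
      AnalyticAt ℝ (fun z => x (V (σ z))) z ∧
      ∀ h, fderiv ℝ (fun z => x (V (σ z))) z h = x (fderiv ℝ V (σ z) h) := by
    intro x z hz
    refine ⟨(x.analyticAt _).comp (hz.comp (hσa z)), fun h => ?_⟩
    have e1 : HasFDerivAt σ (ContinuousLinearMap.id ℝ (ℝ × ℝ)) z :=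
      (hasFDerivAt_id z).sub_const z₀
    have e2 := x.hasFDerivAt.comp z (hz.differentiableAt.hasFDerivAt.comp z e1)
    have := e2.fderiv
    change fderiv ℝ (fun z => x (V (σ z))) z = _ at this
    rw [this]; simp
  refine ⟨fun z => x1 (V (σ z)), fun z => x2 (V (σ z)), fun z => x3 (V (σ z)),
    by simp [σ, hV0, x2], by simp [σ, hV0, x3], ?_⟩
  filter_upwards [hσ.eventually hVe, hσ.eventually hV.eventually_analyticAt] with z hz hza
  refine ⟨⟨(hpd x1 z hza).1, (hpd x2 z hza).1, (hpd x3 z hza).1⟩, ?_⟩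
  have hτσ : τ (σ z) = z := by simp [τ, σ]
  simp only [pdx, pdy, (hpd _ z hza).2, hz.1, hz.2]
  simp [M, N, hτσ, K1, L1, P, Q, S, x1, x2, x3]
  refine ⟨⟨?_, ?_⟩, ?_, ?_⟩ <;> ring

theorem const_of_pd (s : Set (ℝ × ℝ)) (hs : IsOpen s) (hc : Convex ℝ s) (g : ℝ × ℝ → ℝ)
    (hg : ∀ z ∈ s, DifferentiableAt ℝ g z) (hx : ∀ z ∈ s, fderiv ℝ g z (1, 0) = 0)
    (hy : ∀ z ∈ s, fderiv ℝ g z (0, 1) = 0) : ∀ z ∈ s, ∀ w ∈ s, g z = g w := by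
  intro z hz w hw
  refine hs.is_const_of_fderiv_eq_zero hc.isPreconnected
    (fun z hz => (hg z hz).differentiableWithinAt) (fun z hz => ?_) hz hw
  ext
  · simpa using hx z hz
  · simpa using hy z hz

theorem const_on_interval (I : Set ℝ) (hI : IsOpen I) (hI' : I.OrdConnected) (g : ℝ → ℝ)
    (hg : ∀ x ∈ I, HasDerivAt g 0 x) : ∀ x ∈ I, ∀ y ∈ I, g x = g y := by
  intro x hx y hy
  exact hI.is_const_of_deriv_eq_zero hI'.isPreconnected
    (fun z hz => (hg z hz).differentiableAt.differentiableWithinAt)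
    (fun z hz => (hg z hz).deriv) hx hy

end Helpers

/-- Sufficiency of the linearizability conditions: if `f` is cubic in `y'` with
real-analytic coefficients satisfying the stated PDEs, then locally there is a
real-analytic area-preserving point transformation `(χ, φ)` mapping graphs of
solutions of `y'' = f(x,y,y')` onto affine lines. -/
theorem stmt11 (W : Set (ℝ × ℝ)) (hW : IsOpen W)
    (A B C D : ℝ × ℝ → ℝ)
    (hA : AnalyticOnNhd ℝ A W) (hB : AnalyticOnNhd ℝ B W)
    (hC : AnalyticOnNhd ℝ C W) (hD : AnalyticOnNhd ℝ D W)
    (h1 : ∀ z ∈ W, pdy D z - pdx C z = 2 * (B z * D z - C z ^ 2))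
    (h2 : ∀ z ∈ W, pdy C z - pdx B z = A z * D z - B z * C z)
    (h3 : ∀ z ∈ W, pdy B z - pdx A z = 2 * (A z * C z - B z ^ 2))
    (f : ℝ × ℝ × ℝ → ℝ)
    (hf : ∀ x y p : ℝ, f (x, y, p) =
      A (x, y) * p ^ 3 + 3 * B (x, y) * p ^ 2 + 3 * C (x, y) * p + D (x, y)) :
    ∀ z₀ ∈ W, ∃ U₀ : Set (ℝ × ℝ), IsOpen U₀ ∧ z₀ ∈ U₀ ∧ U₀ ⊆ W ∧
      ∃ χ φ : ℝ × ℝ → ℝ,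
        AnalyticOnNhd ℝ χ U₀ ∧ AnalyticOnNhd ℝ φ U₀ ∧
        (∀ z ∈ U₀, pdx χ z * pdy φ z - pdy χ z * pdx φ z = 1) ∧
        ∀ I : Set ℝ, IsOpen I → I.OrdConnected →
          ∀ c : ℝ → ℝ,
            (∀ x ∈ I, DifferentiableAt ℝ c x) →
            (∀ x ∈ I, DifferentiableAt ℝ (deriv c) x) →
            (∀ x ∈ I, deriv (deriv c) x = f (x, c x, deriv c x)) →
            (∀ x ∈ I, (x, c x) ∈ U₀) →
            ∃ a b k : ℝ, (a, b) ≠ ((0 : ℝ), (0 : ℝ)) ∧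
              ∀ x ∈ I, a * χ (x, c x) + b * φ (x, c x) = k := by
  intro z₀ hz₀
  obtain ⟨χ, p1, q1, hp1, hq1, hev1⟩ :=
    exists_affine W hW A B C D hA hB hC hD h1 h2 h3 z₀ hz₀ 1 0
  obtain ⟨φ, p2, q2, hp2, hq2, hev2⟩ :=
    exists_affine W hW A B C D hA hB hC hD h1 h2 h3 z₀ hz₀ 0 1
  obtain ⟨ε, hε, hball⟩ := Metric.eventually_nhds_iff_ball.1
    ((hW.eventually_mem hz₀).and (hev1.and hev2))
  have hjac : ∀ z ∈ Metric.ball z₀ ε, p1 z * q2 z - q1 z * p2 z = 1 := by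
    intro z hz
    have hd : ∀ z ∈ Metric.ball z₀ ε, HasFDerivAt (fun z => p1 z * q2 z - q1 z * p2 z)
        ((p1 z • fderiv ℝ q2 z + q2 z • fderiv ℝ p1 z) -
          (q1 z • fderiv ℝ p2 z + p2 z • fderiv ℝ q1 z)) z := by
      intro z hz
      obtain ⟨-, ⟨⟨-, ap1, aq1⟩, -⟩, ⟨⟨-, ap2, aq2⟩, -⟩⟩ := hball z hz
      exact (ap1.differentiableAt.hasFDerivAt.mul aq2.differentiableAt.hasFDerivAt).sub
        (aq1.differentiableAt.hasFDerivAt.mul ap2.differentiableAt.hasFDerivAt)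
    have h0 := const_of_pd (Metric.ball z₀ ε) Metric.isOpen_ball (convex_ball _ _)
      (fun z => p1 z * q2 z - q1 z * p2 z) (fun z hz => (hd z hz).differentiableAt)
      (fun z hz => by
        obtain ⟨-, ⟨-, -, ⟨e1, -⟩, ⟨e2, -⟩⟩, ⟨-, -, ⟨e3, -⟩, ⟨e4, -⟩⟩⟩ := hball z hz
        simp only [pdx] at e1 e2 e3 e4
        rw [(hd z hz).fderiv]
        simp [e1, e2, e3, e4]
        ring)
      (fun z hz => by
        obtain ⟨-, ⟨-, -, ⟨-, e1⟩, ⟨-, e2⟩⟩, ⟨-, -, ⟨-, e3⟩, ⟨-, e4⟩⟩⟩ := hball z hz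
        simp only [pdy] at e1 e2 e3 e4
        rw [(hd z hz).fderiv]
        simp [e1, e2, e3, e4]
        ring) z hz z₀ (Metric.mem_ball_self hε)
    simpa [hp1, hq1, hp2, hq2] using h0
  refine ⟨Metric.ball z₀ ε, Metric.isOpen_ball, Metric.mem_ball_self hε,
    fun z hz => (hball z hz).1, χ, φ, fun z hz => (hball z hz).2.1.1.1,
    fun z hz => (hball z hz).2.2.1.1, fun z hz => ?_, ?_⟩
  · obtain ⟨-, ⟨-, ⟨e1, e2⟩, -⟩, ⟨-, ⟨e3, e4⟩, -⟩⟩ := hball z hz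
    rw [e1, e2, e3, e4]
    exact hjac z hz
  intro I hI hI' c hc hc' hode hgr
  rcases I.eq_empty_or_nonempty with rfl | ⟨x₁, hx₁⟩
  · exact ⟨1, 0, 0, by simp, by simp⟩
  -- chain rule along the solution curve
  have hchain : ∀ g : ℝ × ℝ → ℝ, ∀ x ∈ I, AnalyticAt ℝ g (x, c x) →
      HasDerivAt (fun x => g (x, c x)) (pdx g (x, c x) + deriv c x * pdy g (x, c x)) x := by
    intro g x hx hg
    have e1 : HasDerivAt (fun x => (x, c x)) ((1 : ℝ), deriv c x) x :=
      (hasDerivAt_id x).prodMk (hc x hx).hasDerivAt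
    have e2 := HasFDerivAt.comp_hasDerivAt x (f := fun x => (x, c x))
      hg.differentiableAt.hasFDerivAt e1
    refine e2.congr_deriv ?_
    have : ((1 : ℝ), deriv c x) = (1, 0) + deriv c x • ((0 : ℝ), (1 : ℝ)) := by ext <;> simp
    rw [this, map_add, map_smul]
    rfl
  let G1 : ℝ → ℝ := fun x => p1 (x, c x) + q1 (x, c x) * deriv c x
  let G2 : ℝ → ℝ := fun x => p2 (x, c x) + q2 (x, c x) * deriv c x
  let lam : ℝ → ℝ := fun x =>
    C (x, c x) + 2 * B (x, c x) * deriv c x + A (x, c x) * deriv c x ^ 2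
  have hG1 : ∀ x ∈ I, HasDerivAt G1 (lam x * G1 x) x := by
    intro x hx
    obtain ⟨-, ⟨⟨-, ap, aq⟩, -, ⟨e1, e2⟩, ⟨e3, e4⟩⟩, -⟩ := hball _ (hgr x hx)
    refine ((hchain p1 x hx ap).add ((hchain q1 x hx aq).mul (hc' x hx).hasDerivAt)).congr_deriv ?_
    rw [e1, e2, e3, e4, hode x hx, hf]
    simp only [G1, lam]
    ring
  have hG2 : ∀ x ∈ I, HasDerivAt G2 (lam x * G2 x) x := by
    intro x hx
    obtain ⟨-, -, ⟨⟨-, ap, aq⟩, -, ⟨e1, e2⟩, ⟨e3, e4⟩⟩⟩ := hball _ (hgr x hx)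
    refine ((hchain p2 x hx ap).add ((hchain q2 x hx aq).mul (hc' x hx).hasDerivAt)).congr_deriv ?_
    rw [e1, e2, e3, e4, hode x hx, hf]
    simp only [G2, lam]
    ring
  have hne : ∀ x ∈ I, ¬ (G1 x = 0 ∧ G2 x = 0) := by
    rintro x hx ⟨e1, e2⟩
    have hj := hjac _ (hgr x hx)
    simp only [G1, G2] at e1 e2
    have : (1 : ℝ) = 0 := by
      rw [← hj]
      linear_combination q2 (x, c x) * e1 - q1 (x, c x) * e2
    exact one_ne_zero this
  have hpos : ∀ x ∈ I, G1 x ^ 2 + G2 x ^ 2 ≠ 0 := by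
    intro x hx h0
    refine hne x hx ⟨?_, ?_⟩ <;> nlinarith [sq_nonneg (G1 x), sq_nonneg (G2 x)]
  -- the normalised first integral
  have hzero : ∀ x ∈ I, G2 x₁ * G1 x - G1 x₁ * G2 x = 0 := by
    intro x hx
    have hk := const_on_interval I hI hI'
      (fun x => (G2 x₁ * G1 x - G1 x₁ * G2 x) ^ 2 / (G1 x ^ 2 + G2 x ^ 2))
      (fun x hx => by
        have n1 := (((hG1 x hx).const_mul (G2 x₁)).sub ((hG2 x hx).const_mul (G1 x₁))).pow 2
        have n2 := ((hG1 x hx).pow 2).add ((hG2 x hx).pow 2)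
        refine (n1.div n2 (hpos x hx)).congr_deriv ?_
        rw [div_eq_zero_iff]
        left
        simp
        ring) x hx x₁ hx₁
    have h0 : G2 x₁ * G1 x₁ - G1 x₁ * G2 x₁ = 0 := by ring
    simp only [h0] at hk
    rw [zero_pow two_ne_zero, zero_div, div_eq_zero_iff] at hk
    exact pow_eq_zero_iff two_ne_zero |>.1 (hk.resolve_right (hpos x hx))
  refine ⟨G2 x₁, -G1 x₁, G2 x₁ * χ (x₁, c x₁) + -G1 x₁ * φ (x₁, c x₁), ?_, fun x hx => ?_⟩
  · intro h
    rw [Prod.mk.injEq, neg_eq_zero] at h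
    exact hne x₁ hx₁ ⟨h.2, h.1⟩
  · refine const_on_interval I hI hI'
      (fun x => G2 x₁ * χ (x, c x) + -G1 x₁ * φ (x, c x)) (fun x hx => ?_) x hx x₁ hx₁
    obtain ⟨-, ⟨⟨au, -, -⟩, ⟨e1, e2⟩, -⟩, ⟨⟨av, -, -⟩, ⟨e3, e4⟩, -⟩⟩ := hball _ (hgr x hx)
    refine (((hchain χ x hx au).const_mul _).add ((hchain φ x hx av).const_mul _)).congr_deriv ?_
    rw [e1, e2, e3, e4, ← hzero x hx]
    simp only [G1, G2]
    ring
end
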